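/- For p ≥ 1 and probability measures μ, ν on ℝ with finite p-th moments, the p-Wasserstein distance satisfies W_p(μ,ν) = ‖X_μ − X_ν‖_{L^p(0,1)}, where X_μ, X_ν are the respective quantile functions. -/

import Mathlib

open Set MeasureTheory
open scoped ENNReal NNReal

/-- Quantile function of a probability measure on `ℝ`. -/
noncomputable def quantile (μ : Measure ℝ) (z : ℝ) : ℝ :=
  sInf {a : ℝ | z < (μ (Iio a)).toReal}

/-- The `p`-Wasserstein transport cost `W_p(μ,ν)^p`: the infimum over couplings `π`
of `μ` and `ν` of `∫ |x - y|^p dπ`. -/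
noncomputable def WpCost (p : ℝ) (μ ν : Measure ℝ) : ℝ≥0∞ :=
  sInf {c | ∃ π : Measure (ℝ × ℝ), IsProbabilityMeasure π ∧
    π.map Prod.fst = μ ∧ π.map Prod.snd = ν ∧
    c = ∫⁻ q, ENNReal.ofReal (|q.1 - q.2| ^ p) ∂π}

/-!
The coupling `(X_μ, X_ν)` under Lebesgue measure on `(0, 1)` gives every quadrant
`(-∞, s) × [t, ∞)` the mass `μ (-∞, s) - ν (-∞, t)` (truncated at `0`), which is the least mass
that any coupling of `μ` and `ν` can give it. By Fubini, integrating these masses along the line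
`t = s + r` yields `∫ (y - x - r)₊ dπ(x, y)`, so the quantile coupling minimises each of these
ramp costs. For `p ≥ 1` the function `u₊ ^ p` is a positive mixture of the ramps `(u - r)₊` with
`r ≥ 0`, and `|x - y| ^ p = (y - x)₊ ^ p + (x - y)₊ ^ p`.
-/

open Filter Topology

section Quantile

lemma exists_lt_lt_measure_Iio {α : Type*} [LinearOrder α] [TopologicalSpace α] [OrderTopology α]
    [DenselyOrdered α] [NoMinOrder α] [FirstCountableTopology α] [MeasurableSpace α]
    {μ : Measure α} {a : α} {c : ℝ≥0∞} (h : c < μ (Iio a)) : ∃ b < a, c < μ (Iio b) := by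
  obtain ⟨u, hu_mono, hu_lt, hu_tendsto⟩ := exists_seq_strictMono_tendsto a
  have hu_union : ⋃ n, Iio (u n) = Iio a :=
    (isLUB_of_tendsto_atTop hu_mono.monotone hu_tendsto).iUnion_Iio_eq
  have hIio_mono : Monotone fun n ↦ Iio (u n) := monotone_Iio.comp hu_mono.monotone
  rw [← hu_union, hIio_mono.measure_iUnion] at h
  obtain ⟨n, hn⟩ := lt_iSup_iff.1 h
  exact ⟨u n, hu_lt n, hn⟩

variable (μ : Measure ℝ) [IsFiniteMeasure μ] {z : ℝ}

lemma monotone_measureReal_Iio : Monotone fun a ↦ μ.real (Iio a) :=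
  fun _ _ hab ↦ measureReal_mono (Iio_subset_Iio hab)

variable {μ}

lemma nonempty_setOf_lt_measureReal_Iio (hz : z < μ.real univ) :
    {a | z < μ.real (Iio a)}.Nonempty := by
  have hlim : Tendsto (fun a ↦ μ.real (Iio a)) atTop (𝓝 (μ.real univ)) := by
    rw [← iUnion_Iio (α := ℝ)]
    exact (ENNReal.tendsto_toReal (measure_ne_top _ _)).comp
      (tendsto_measure_iUnion_atTop monotone_Iio)
  exact (hlim.eventually_const_lt hz).exists

lemma bddBelow_setOf_lt_measureReal_Iio (hz : 0 < z) :
    BddBelow {a | z < μ.real (Iio a)} := by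
  have hlim : Tendsto (fun a ↦ μ.real (Iio a)) atBot (𝓝 0) := by
    have hInter : ⋂ a : ℝ, Iio a = ∅ := iInter_eq_empty_iff.2 fun x ↦ ⟨x, lt_irrefl x⟩
    rw [← measureReal_empty (μ := μ), ← hInter]
    exact (ENNReal.tendsto_toReal (measure_ne_top _ _)).comp
      (tendsto_measure_iInter_atBot (fun _ ↦ measurableSet_Iio.nullMeasurableSet) monotone_Iio
        ⟨0, measure_ne_top _ _⟩)
  obtain ⟨b, hb⟩ := (hlim.eventually_lt_const hz).exists
  exact ⟨b, fun a ha ↦ ((monotone_measureReal_Iio μ).reflect_lt (hb.trans ha)).le⟩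

lemma quantile_lt_iff (hz : z ∈ Ioo 0 (μ.real univ)) {a : ℝ} :
    quantile μ z < a ↔ z < μ.real (Iio a) := by
  have hbdd := bddBelow_setOf_lt_measureReal_Iio (μ := μ) hz.1
  constructor
  · intro h
    obtain ⟨b, hb, hba⟩ := (csInf_lt_iff hbdd (nonempty_setOf_lt_measureReal_Iio hz.2)).1 h
    exact hb.trans_le (monotone_measureReal_Iio μ hba.le)
  · intro h
    obtain ⟨b, hba, hb⟩ :=
      exists_lt_lt_measure_Iio ((ENNReal.ofReal_lt_iff_lt_toReal hz.1.le (measure_ne_top _ _)).2 h)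
    have hzb : z < μ.real (Iio b) :=
      (ENNReal.ofReal_lt_iff_lt_toReal hz.1.le (measure_ne_top _ _)).1 hb
    exact (csInf_le hbdd hzb).trans_lt hba

lemma le_quantile_iff (hz : z ∈ Ioo 0 (μ.real univ)) {a : ℝ} :
    a ≤ quantile μ z ↔ μ.real (Iio a) ≤ z := by
  simpa only [not_lt] using (quantile_lt_iff hz).not

variable (μ)

lemma monotoneOn_quantile : MonotoneOn (quantile μ) (Ioo 0 (μ.real univ)) :=
  fun _ hx _ hy hxy ↦ (le_quantile_iff hy).2 (((le_quantile_iff hx).1 le_rfl).trans hxy)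

lemma aemeasurable_quantile :
    AEMeasurable (quantile μ) (volume.restrict (Ioo 0 (μ.real univ))) :=
  aemeasurable_restrict_of_monotoneOn measurableSet_Ioo (monotoneOn_quantile μ)

lemma map_quantile : (volume.restrict (Ioo 0 (μ.real univ))).map (quantile μ) = μ := by
  have hIio (a : ℝ) :
      (volume.restrict (Ioo 0 (μ.real univ))).map (quantile μ) (Iio a) = μ (Iio a) := by
    have hpre : quantile μ ⁻¹' Iio a ∩ Ioo 0 (μ.real univ) = Ioo 0 (μ.real (Iio a)) := by
      ext z
      constructor
      · rintro ⟨hza, hz⟩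
        exact ⟨hz.1, (quantile_lt_iff hz).1 hza⟩
      · rintro ⟨hz, hza⟩
        have hz' : z ∈ Ioo 0 (μ.real univ) := ⟨hz, hza.trans_le (measureReal_mono (subset_univ _))⟩
        exact ⟨(quantile_lt_iff hz').2 hza, hz'⟩
    rw [Measure.map_apply_of_aemeasurable (aemeasurable_quantile μ) measurableSet_Iio,
      Measure.restrict_apply' measurableSet_Ioo, hpre, Real.volume_Ioo, sub_zero,
      ofReal_measureReal]
  have huniv : (volume.restrict (Ioo 0 (μ.real univ))).map (quantile μ) univ = μ univ := by
    rw [Measure.map_apply_of_aemeasurable (aemeasurable_quantile μ) .univ, preimage_univ,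
      Measure.restrict_apply_univ, Real.volume_Ioo, sub_zero, ofReal_measureReal]
  refine Measure.ext_of_Ici _ _ fun a ↦ ?_
  rw [← compl_Iio, measure_compl measurableSet_Iio (measure_ne_top _ _),
    measure_compl measurableSet_Iio (measure_ne_top _ _), huniv, hIio]

end Quantile

section Coupling

variable {α β : Type*} [MeasurableSpace α] [MeasurableSpace β]

/-- `π` is a coupling (transport plan) of `μ` and `ν`: a measure on the product with these
marginals. Total mass one is inherited from `μ` and not part of the definition. -/
structure IsCoupling (π : Measure (α × β)) (μ : Measure α) (ν : Measure β) : Prop where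
  map_fst : π.map Prod.fst = μ
  map_snd : π.map Prod.snd = ν

namespace IsCoupling

variable {π : Measure (α × β)} {μ : Measure α} {ν : Measure β}

lemma isProbabilityMeasure [IsProbabilityMeasure μ] (h : IsCoupling π μ ν) :
    IsProbabilityMeasure π := by
  have : IsProbabilityMeasure (π.map Prod.fst) := h.map_fst ▸ inferInstance
  exact Measure.isProbabilityMeasure_of_map Prod.fst

lemma swap (h : IsCoupling π μ ν) : IsCoupling (π.map Prod.swap) ν μ where
  map_fst := by rw [Measure.map_map measurable_fst measurable_swap]; exact h.map_snd
  map_snd := by rw [Measure.map_map measurable_snd measurable_swap]; exact h.map_fst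

lemma measure_sub_le_measure_prod_compl (h : IsCoupling π μ ν) {s : Set α} {t : Set β}
    (hs : MeasurableSet s) (ht : MeasurableSet t) : μ s - ν t ≤ π (s ×ˢ tᶜ) := by
  have hcover : Prod.fst ⁻¹' s ⊆ s ×ˢ tᶜ ∪ Prod.snd ⁻¹' t := fun q hq ↦
    (em (q.2 ∈ t)).symm.imp (fun hqt ↦ ⟨hq, hqt⟩) id
  rw [tsub_le_iff_right, ← h.map_fst, ← h.map_snd, Measure.map_apply measurable_fst hs,
    Measure.map_apply measurable_snd ht]
  exact (measure_mono hcover).trans (measure_union_le _ _)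

lemma WpCost_eq_of_forall_le {p : ℝ} {ρ : Measure (ℝ × ℝ)} {μ ν : Measure ℝ}
    [IsProbabilityMeasure μ] (hρ : IsCoupling ρ μ ν)
    (hmin : ∀ π, IsCoupling π μ ν → ∫⁻ q, ENNReal.ofReal (|q.1 - q.2| ^ p) ∂ρ
      ≤ ∫⁻ q, ENNReal.ofReal (|q.1 - q.2| ^ p) ∂π) :
    WpCost p μ ν = ∫⁻ q, ENNReal.ofReal (|q.1 - q.2| ^ p) ∂ρ := by
  refine IsLeast.csInf_eq ⟨⟨ρ, hρ.isProbabilityMeasure, hρ.map_fst, hρ.map_snd, rfl⟩, ?_⟩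
  rintro _ ⟨π, -, hfst, hsnd, rfl⟩
  exact hmin π ⟨hfst, hsnd⟩

end IsCoupling

end Coupling

section QuantileCoupling

/-- The monotone (comonotone) coupling of two probability measures on `ℝ`: the joint law of their
quantile functions under Lebesgue measure on `(0, 1)`. -/
noncomputable def quantileCoupling (μ ν : Measure ℝ) : Measure (ℝ × ℝ) :=
  (volume.restrict (Ioo 0 1)).map fun z ↦ (quantile μ z, quantile ν z)

variable (μ ν : Measure ℝ) [IsProbabilityMeasure μ] [IsProbabilityMeasure ν]

lemma aemeasurable_quantile_prodMk_quantile :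
    AEMeasurable (fun z ↦ (quantile μ z, quantile ν z)) (volume.restrict (Ioo 0 1)) := by
  have hμ := aemeasurable_quantile μ
  have hν := aemeasurable_quantile ν
  rw [probReal_univ] at hμ hν
  exact hμ.prodMk hν

lemma isCoupling_quantileCoupling : IsCoupling (quantileCoupling μ ν) μ ν where
  map_fst := by
    rw [quantileCoupling, AEMeasurable.map_map_of_aemeasurable measurable_fst.aemeasurable
      (aemeasurable_quantile_prodMk_quantile μ ν)]
    have h := map_quantile μ
    rwa [probReal_univ] at h
  map_snd := by
    rw [quantileCoupling, AEMeasurable.map_map_of_aemeasurable measurable_snd.aemeasurable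
      (aemeasurable_quantile_prodMk_quantile μ ν)]
    have h := map_quantile ν
    rwa [probReal_univ] at h

lemma map_swap_quantileCoupling :
    (quantileCoupling μ ν).map Prod.swap = quantileCoupling ν μ :=
  AEMeasurable.map_map_of_aemeasurable measurable_swap.aemeasurable
    (aemeasurable_quantile_prodMk_quantile μ ν)

variable {μ ν}

lemma lintegral_quantileCoupling {f : ℝ × ℝ → ℝ≥0∞} (hf : Measurable f) :
    ∫⁻ q, f q ∂quantileCoupling μ ν = ∫⁻ z in Ioo 0 1, f (quantile μ z, quantile ν z) :=
  lintegral_map' hf.aemeasurable (aemeasurable_quantile_prodMk_quantile μ ν)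

lemma quantileCoupling_Iio_prod_Ici_le (s t : ℝ) :
    quantileCoupling μ ν (Iio s ×ˢ Ici t) ≤ μ (Iio s) - ν (Iio t) := by
  have hsub : (fun z ↦ (quantile μ z, quantile ν z)) ⁻¹' (Iio s ×ˢ Ici t) ∩ Ioo 0 1 ⊆
      Ico (ν.real (Iio t)) (μ.real (Iio s)) := by
    rintro z ⟨⟨hzs, hzt⟩, hz⟩
    exact ⟨(le_quantile_iff (by rwa [probReal_univ])).1 hzt,
      (quantile_lt_iff (by rwa [probReal_univ])).1 hzs⟩
  calc quantileCoupling μ ν (Iio s ×ˢ Ici t)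
      = volume ((fun z ↦ (quantile μ z, quantile ν z)) ⁻¹' (Iio s ×ˢ Ici t) ∩ Ioo 0 1) := by
        rw [quantileCoupling, Measure.map_apply_of_aemeasurable
          (aemeasurable_quantile_prodMk_quantile μ ν) (measurableSet_Iio.prod measurableSet_Ici),
          Measure.restrict_apply' measurableSet_Ioo]
    _ ≤ volume (Ico (ν.real (Iio t)) (μ.real (Iio s))) := measure_mono hsub
    _ = μ (Iio s) - ν (Iio t) := by
        rw [Real.volume_Ico, ENNReal.ofReal_sub _ measureReal_nonneg, ofReal_measureReal,
          ofReal_measureReal]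

lemma quantileCoupling_Iio_prod_Ici_le_of_isCoupling {π : Measure (ℝ × ℝ)}
    (hπ : IsCoupling π μ ν) (s t : ℝ) :
    quantileCoupling μ ν (Iio s ×ˢ Ici t) ≤ π (Iio s ×ˢ Ici t) := by
  have hlower := hπ.measure_sub_le_measure_prod_compl (s := Iio s) (t := Iio t)
    measurableSet_Iio measurableSet_Iio
  rw [compl_Iio] at hlower
  exact (quantileCoupling_Iio_prod_Ici_le s t).trans hlower

end QuantileCoupling

section RampCosts

lemma lintegral_ofReal_sub_sub (π : Measure (ℝ × ℝ)) [SFinite π] (r : ℝ) :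
    ∫⁻ q, ENNReal.ofReal (q.2 - q.1 - r) ∂π = ∫⁻ s, π (Iio s ×ˢ Ici (s + r)) := by
  let S : Set ((ℝ × ℝ) × ℝ) := {w | w.1.1 < w.2 ∧ w.2 + r ≤ w.1.2}
  have hS : MeasurableSet S :=
    (measurableSet_lt measurable_fst.fst measurable_snd).inter
      (measurableSet_le (measurable_snd.add_const r) measurable_fst.snd)
  have hslice (q : ℝ × ℝ) : volume (Prod.mk q ⁻¹' S) = ENNReal.ofReal (q.2 - q.1 - r) := by
    have : Prod.mk q ⁻¹' S = Ioc q.1 (q.2 - r) := by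
      ext s
      exact and_congr_right' le_sub_iff_add_le.symm
    rw [this, Real.volume_Ioc, sub_right_comm]
  calc ∫⁻ q, ENNReal.ofReal (q.2 - q.1 - r) ∂π
      = π.prod volume S := by simp only [Measure.prod_apply hS, hslice]
    _ = ∫⁻ s, π (Iio s ×ˢ Ici (s + r)) := Measure.prod_apply_symm hS

variable {p : ℝ}

lemma ofReal_max_zero_rpow_eq_mul_lintegral_Ioo (hp : 0 < p) (u : ℝ) :
    ENNReal.ofReal (max u 0 ^ p)
      = ENNReal.ofReal p * ∫⁻ t in Ioo 0 u, ENNReal.ofReal (t ^ (p - 1)) := by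
  have hlayer := lintegral_rpow_eq_lintegral_meas_lt_mul (Measure.dirac ()) (f := fun _ ↦ max u 0)
    (ae_of_all _ fun _ ↦ le_max_right u 0) aemeasurable_const hp
  rw [lintegral_dirac] at hlayer
  rw [hlayer, ← Ioi_inter_Iio, inter_comm, ← setLIntegral_indicator measurableSet_Iio]
  congr 1
  refine setLIntegral_congr_fun measurableSet_Ioi fun t (ht : 0 < t) ↦ ?_
  by_cases htu : t < u <;> simp [htu, ht.not_gt]

lemma ofReal_max_zero_rpow_eq_lintegral_ofReal_sub_mul (hp : 1 < p) (u : ℝ) :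
    ENNReal.ofReal (max u 0 ^ p)
      = ∫⁻ r in Ioi 0, ENNReal.ofReal (p * (p - 1) * r ^ (p - 2)) * ENNReal.ofReal (u - r) := by
  have hp₀ : 0 < p := one_pos.trans hp
  have htail {r : ℝ} (hr : 0 < r) :
      volume.restrict (Ioo 0 u) {t | r < t} = ENNReal.ofReal (u - r) := by
    have : {t | r < t} ∩ Ioo 0 u = Ioo r u := by
      ext t
      exact ⟨fun h ↦ ⟨h.1, h.2.2⟩, fun h ↦ ⟨h.1, hr.trans h.1, h.2⟩⟩
    rw [Measure.restrict_apply' measurableSet_Ioo, this, Real.volume_Ioo]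
  have hlayer := lintegral_rpow_eq_lintegral_meas_lt_mul (μ := volume.restrict (Ioo 0 u))
    (f := fun t ↦ t) ((ae_restrict_mem measurableSet_Ioo).mono fun t ht ↦ ht.1.le) aemeasurable_id
    (sub_pos.2 hp)
  rw [ofReal_max_zero_rpow_eq_mul_lintegral_Ioo hp₀, hlayer, ← mul_assoc,
    ← ENNReal.ofReal_mul hp₀.le, ← lintegral_const_mul' _ _ ENNReal.ofReal_ne_top]
  refine setLIntegral_congr_fun measurableSet_Ioi fun r hr ↦ ?_
  have hexp : p - 1 - 1 = p - 2 := by ring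
  have hcoef : 0 ≤ p * (p - 1) := mul_nonneg hp₀.le (sub_pos.2 hp).le
  simp only [htail hr, hexp, ENNReal.ofReal_mul hcoef]
  ring

lemma exists_lintegral_ofReal_sub_eq_rpow (hp : 1 ≤ p) :
    ∃ κ : Measure ℝ, SFinite κ ∧
      ∀ u : ℝ, ∫⁻ r, ENNReal.ofReal (u - r) ∂κ = ENNReal.ofReal (max u 0 ^ p) := by
  -- `κ` is the second derivative of `u₊ ^ p`; for `p = 1` it is a unit point mass at `0`.
  rcases hp.eq_or_lt with rfl | hp
  · refine ⟨Measure.dirac 0, inferInstance, fun u ↦ ?_⟩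
    rw [lintegral_dirac, sub_zero, Real.rpow_one, ENNReal.ofReal_max, ENNReal.ofReal_zero,
      max_eq_left zero_le]
  · refine ⟨(volume.restrict (Ioi 0)).withDensity
      fun r ↦ ENNReal.ofReal (p * (p - 1) * r ^ (p - 2)), inferInstance, fun u ↦ ?_⟩
    rw [ofReal_max_zero_rpow_eq_lintegral_ofReal_sub_mul hp,
      lintegral_withDensity_eq_lintegral_mul _ (by fun_prop) (by fun_prop)]
    rfl

lemma lintegral_max_sub_rpow_mono (hp : 1 ≤ p) {ρ π : Measure (ℝ × ℝ)} [SFinite ρ] [SFinite π]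
    (h : ∀ s t, ρ (Iio s ×ˢ Ici t) ≤ π (Iio s ×ˢ Ici t)) :
    ∫⁻ q, ENNReal.ofReal (max (q.2 - q.1) 0 ^ p) ∂ρ
      ≤ ∫⁻ q, ENNReal.ofReal (max (q.2 - q.1) 0 ^ p) ∂π := by
  obtain ⟨κ, _, hκ⟩ := exists_lintegral_ofReal_sub_eq_rpow hp
  have hfubini (m : Measure (ℝ × ℝ)) [SFinite m] :
      ∫⁻ q, ENNReal.ofReal (max (q.2 - q.1) 0 ^ p) ∂m
        = ∫⁻ r, (∫⁻ s, m (Iio s ×ˢ Ici (s + r))) ∂κ := by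
    calc ∫⁻ q, ENNReal.ofReal (max (q.2 - q.1) 0 ^ p) ∂m
        = ∫⁻ q, ∫⁻ r, ENNReal.ofReal (q.2 - q.1 - r) ∂κ ∂m := by simp only [hκ]
      _ = ∫⁻ r, ∫⁻ q, ENNReal.ofReal (q.2 - q.1 - r) ∂m ∂κ :=
        lintegral_lintegral_swap (by fun_prop)
      _ = ∫⁻ r, (∫⁻ s, m (Iio s ×ˢ Ici (s + r))) ∂κ := by simp only [lintegral_ofReal_sub_sub]
  rw [hfubini, hfubini]
  exact lintegral_mono fun r ↦ lintegral_mono fun s ↦ h s (s + r)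

lemma lintegral_abs_sub_rpow_eq_add (hp : 0 < p) (m : Measure (ℝ × ℝ)) :
    ∫⁻ q, ENNReal.ofReal (|q.1 - q.2| ^ p) ∂m
      = ∫⁻ q, ENNReal.ofReal (max (q.2 - q.1) 0 ^ p) ∂m
        + ∫⁻ q, ENNReal.ofReal (max (q.2 - q.1) 0 ^ p) ∂(m.map Prod.swap) := by
  rw [lintegral_map (by fun_prop) measurable_swap, ← lintegral_add_left (by fun_prop)]
  refine lintegral_congr fun q ↦ ?_
  rcases le_total q.1 q.2 with h | h <;>
    simp [h, abs_of_nonneg, abs_of_nonpos, Real.zero_rpow hp.ne']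

end RampCosts

lemma lintegral_rpow_quantileCoupling_le {p : ℝ} (hp : 1 ≤ p) {μ ν : Measure ℝ}
    [IsProbabilityMeasure μ] [IsProbabilityMeasure ν] {π : Measure (ℝ × ℝ)}
    (hπ : IsCoupling π μ ν) :
    ∫⁻ q, ENNReal.ofReal (|q.1 - q.2| ^ p) ∂quantileCoupling μ ν
      ≤ ∫⁻ q, ENNReal.ofReal (|q.1 - q.2| ^ p) ∂π := by
  have := hπ.isProbabilityMeasure
  have := hπ.swap.isProbabilityMeasure
  have := (isCoupling_quantileCoupling μ ν).isProbabilityMeasure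
  have := (isCoupling_quantileCoupling ν μ).isProbabilityMeasure
  have hp₀ : 0 < p := one_pos.trans_le hp
  rw [lintegral_abs_sub_rpow_eq_add hp₀, lintegral_abs_sub_rpow_eq_add hp₀,
    map_swap_quantileCoupling]
  exact add_le_add
    (lintegral_max_sub_rpow_mono hp (quantileCoupling_Iio_prod_Ici_le_of_isCoupling hπ))
    (lintegral_max_sub_rpow_mono hp (quantileCoupling_Iio_prod_Ici_le_of_isCoupling hπ.swap))

theorem wasserstein_eq_quantile_Lp_general (p : ℝ) (hp : 1 ≤ p)
    (μ ν : Measure ℝ) [IsProbabilityMeasure μ] [IsProbabilityMeasure ν] :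
    WpCost p μ ν
      = ∫⁻ z in Ioo (0:ℝ) 1, ENNReal.ofReal (|quantile μ z - quantile ν z| ^ p) := by
  rw [(isCoupling_quantileCoupling μ ν).WpCost_eq_of_forall_le
    fun _ hπ ↦ lintegral_rpow_quantileCoupling_le hp hπ]
  exact lintegral_quantileCoupling (by fun_prop)

/-- For `p ≥ 1` and probability measures on `ℝ` with finite `p`-th moments,
`W_p(μ,ν) = ‖X_μ - X_ν‖_{L^p(0,1)}` (stated for the `p`-th powers of both sides). -/
theorem wasserstein_eq_quantile_Lp (p : ℝ) (hp : 1 ≤ p)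
    (μ ν : Measure ℝ) [IsProbabilityMeasure μ] [IsProbabilityMeasure ν]
    (hμ : (∫⁻ x, ENNReal.ofReal (|x| ^ p) ∂μ) < ⊤)
    (hν : (∫⁻ x, ENNReal.ofReal (|x| ^ p) ∂ν) < ⊤) :
    WpCost p μ ν
      = ∫⁻ z in Ioo (0:ℝ) 1, ENNReal.ofReal (|quantile μ z - quantile ν z| ^ p) :=
  wasserstein_eq_quantile_Lp_general p hp μ ν
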